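/- Let a > −1, let m ≥ 1, and let 1 > s₁ ≥ s₂ ≥ ⋯ ≥ s_m ≥ 0 be real numbers. Then the iterated integral ∫_{s₁}^{1} dt₁ ∫_{s₂}^{s₁} dt₂ ⋯ ∫_{s_m}^{s_{m−1}} dt_m ∫_{0}^{s_m} dt_{m+1} ∏_{k=1}^{m+1} (1 − t_k²)^a · ∏_{1≤j<k≤m+1} (t_j² − t_k²) equals ( √π Γ(a+1) / (2 Γ(a+3/2)) ) · ( ∏_{k=1}^{m} 1/(2a+1+2k) ) · ∏_{k=1}^{m} s_k (1 − s_k²)^{a+1} · ∏_{1≤j<k≤m} (s_j² − s_k²). -/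

import Mathlib

open MeasureTheory

/-!
With `v = -t²` the integrand is a weighted Vandermonde determinant, in which the powers `v ^ j` may
be replaced by any monic polynomials of degree `j`. Integrating the rows over their intervals and
telescoping them yields the determinant of the primitives from `0`, taken at the upper ends of the
intervals. For `0 < j` the monic polynomial can be chosen so that its primitive is elementary and
vanishes at `t = 1`. The first row of the determinant is then `(θ, 0, …, 0)`, with `θ` the half mass
of the weight, and the remaining minor is again a weighted Vandermonde determinant.
-/

section Determinants

variable {R : Type*} [CommRing R]

theorem det_sub_succ_row {n : ℕ} (A : Matrix (Fin (n + 1)) (Fin n) R)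
    (hA : ∀ j, A (Fin.last n) j = 0) :
    (Matrix.of fun i j : Fin n ↦ A i.castSucc j - A i.succ j).det =
      (Matrix.of fun i j : Fin n ↦ A i.castSucc j).det := by
  cases n with
  | zero => simp only [Matrix.det_isEmpty]
  | succ n =>
    rw [← Matrix.det_submatrix_equiv_self Fin.revPerm,
      ← Matrix.det_submatrix_equiv_self Fin.revPerm (Matrix.of fun i j ↦ A i.castSucc j)]
    refine (Matrix.det_eq_of_forall_row_eq_smul_add_pred (fun _ ↦ 1) (fun j ↦ ?_)
      fun i j ↦ ?_).symm
    · simp [hA]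
    · simp [Fin.rev_succ, Fin.rev_castSucc]

theorem det_eq_mul_det_submatrix_succ {n : ℕ} (A : Matrix (Fin (n + 1)) (Fin (n + 1)) R)
    (hA : ∀ j : Fin n, A 0 j.succ = 0) :
    A.det = A 0 0 * (A.submatrix Fin.succ Fin.succ).det := by
  simp [Matrix.det_succ_row_zero, Fin.sum_univ_succ, hA]

theorem prod_mul_det_vandermonde {n : ℕ} (w v : Fin n → R) (p : Fin n → Polynomial R)
    (hdeg : ∀ j, (p j).natDegree = j) (hmonic : ∀ j, (p j).Monic) :
    (∏ i, w i) * (Matrix.vandermonde v).det =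
      (Matrix.of fun i j ↦ w i * (p j).eval (v i)).det := by
  rw [Matrix.det_eval_matrixOfPolynomials_eq_det_vandermonde v p hdeg hmonic,
    ← Matrix.det_mul_column]
  rfl

theorem det_vandermonde_neg_sq {n : ℕ} (y : Fin n → R) :
    (Matrix.vandermonde fun i ↦ -y i ^ 2).det =
      ∏ k, ∏ j ∈ Finset.Iio k, (y j ^ 2 - y k ^ 2) := by
  rw [Matrix.det_vandermonde,
    Finset.prod_comm' (t' := Finset.univ) (s' := fun k ↦ Finset.Iio k) (by simp)]
  simp only [neg_sub_neg]

end Determinants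

theorem integral_pi_det {ι 𝕜 : Type*} [Fintype ι] [DecidableEq ι] [RCLike 𝕜] {E : ι → Type*}
    [∀ i, MeasurableSpace (E i)] (μ : ∀ i, Measure (E i)) [∀ i, SigmaFinite (μ i)]
    (f : ∀ i, ι → E i → 𝕜) (hf : ∀ i j, Integrable (f i j) (μ i)) :
    ∫ t, (Matrix.of fun i j ↦ f i j (t i)).det ∂Measure.pi μ =
      (Matrix.of fun i j ↦ ∫ x, f i j x ∂μ i).det := by
  simp_rw [← Matrix.det_transpose (Matrix.of _), Matrix.det_apply', Matrix.transpose_apply,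
    Matrix.of_apply]
  rw [integral_finsetSum _ fun σ _ ↦
    (Integrable.fintype_prod_dep fun i ↦ hf i (σ i)).const_mul _]
  refine Finset.sum_congr rfl fun σ _ ↦ ?_
  rw [integral_const_mul, integral_fintype_prod_eq_prod fun i ↦ f i (σ i)]

theorem setIntegral_interlacing_det {𝕜 : Type*} [RCLike 𝕜] {n : ℕ} {x : Fin (n + 1) → ℝ}
    (hx : Antitone x) (f : Fin n → ℝ → 𝕜)
    (hf : ∀ j, IntervalIntegrable (f j) volume (x (Fin.last n)) (x 0)) :
    ∫ t in Set.univ.pi fun i : Fin n ↦ Set.Ioo (x i.succ) (x i.castSucc),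
        (Matrix.of fun i j ↦ f j (t i)).det =
      (Matrix.of fun i j ↦ ∫ u in x (Fin.last n)..x i.castSucc, f j u).det := by
  have hmem (k : Fin (n + 1)) : x k ∈ Set.uIcc (x (Fin.last n)) (x 0) :=
    Set.Icc_subset_uIcc ⟨hx (Fin.le_last k), hx (Fin.zero_le k)⟩
  have hint (k l : Fin (n + 1)) (j : Fin n) : IntervalIntegrable (f j) volume (x k) (x l) :=
    (hf j).mono_set (Set.uIcc_subset_uIcc (hmem k) (hmem l))
  have hle (i : Fin n) : x i.succ ≤ x i.castSucc := hx i.castSucc_lt_succ.le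
  have hrow (i j : Fin n) : ∫ u in Set.Ioo (x i.succ) (x i.castSucc), f j u =
      (∫ u in x (Fin.last n)..x i.castSucc, f j u) - ∫ u in x (Fin.last n)..x i.succ, f j u := by
    rw [intervalIntegral.integral_interval_sub_left (hint _ _ j) (hint _ _ j),
      intervalIntegral.integral_of_le (hle i), integral_Ioc_eq_integral_Ioo]
  rw [volume_pi, Measure.restrict_pi_pi, integral_pi_det _ (fun _ j ↦ f j) fun i j ↦
    (intervalIntegrable_iff_integrableOn_Ioo_of_le (hle i)).1 (hint _ _ j)]
  simp_rw [hrow]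
  exact det_sub_succ_row (fun k j ↦ ∫ u in x (Fin.last n)..x k, f j u)
    fun j ↦ intervalIntegral.integral_same

theorem integral_rpow_mul_one_sub_rpow_eq_beta {u v : ℝ} (hu : 0 < u) (hv : 0 < v) :
    ∫ y in (0 : ℝ)..1, y ^ (u - 1) * (1 - y) ^ (v - 1) = ProbabilityTheory.beta u v := by
  rw [ProbabilityTheory.beta_eq_betaIntegralReal u v hu hv, Complex.betaIntegral,
    ← Complex.ofReal_re (∫ y in (0 : ℝ)..1, _), ← intervalIntegral.integral_ofReal]
  congr 1
  refine intervalIntegral.integral_congr fun y hy ↦ ?_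
  rw [Set.uIcc_of_le zero_le_one] at hy
  simp [Complex.ofReal_cpow hy.1, Complex.ofReal_cpow (sub_nonneg.2 hy.2)]

theorem integral_rpow_mul_one_sub_sq_rpow {u v : ℝ} (hu : 0 < u) (hv : 0 < v) :
    ∫ t in (0 : ℝ)..1, t ^ (2 * u - 1) * (1 - t ^ 2) ^ (v - 1) =
      ProbabilityTheory.beta u v / 2 := by
  have hsubst := integral_Icc_deriv_smul_of_deriv_nonneg (a := 0) (b := 1)
    (f := fun t : ℝ ↦ t ^ 2) (f' := fun t ↦ 2 * t)
    (g := fun y : ℝ ↦ y ^ (u - 1) * (1 - y) ^ (v - 1)) (by fun_prop)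
    (fun t _ ↦ by simpa using hasDerivAt_pow 2 t) (fun t ht ↦ by linarith [ht.1]) zero_le_one
  have hjac : Set.EqOn (fun t : ℝ ↦ (2 * t) • ((t ^ 2) ^ (u - 1) * (1 - t ^ 2) ^ (v - 1)))
      (fun t ↦ 2 * (t ^ (2 * u - 1) * (1 - t ^ 2) ^ (v - 1))) (Set.Ioc 0 1) := fun t ht ↦ by
    have hpow : t * (t ^ 2) ^ (u - 1) = t ^ (2 * u - 1) := by
      rw [show 2 * u - 1 = 1 + (2 : ℕ) * (u - 1) by push_cast; ring, Real.rpow_add ht.1,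
        Real.rpow_one, Real.rpow_natCast_mul ht.1.le]
    simp only [smul_eq_mul, ← hpow]
    ring
  rw [integral_Icc_eq_integral_Ioc, setIntegral_congr_fun measurableSet_Ioc hjac,
    integral_const_mul, zero_pow two_ne_zero, one_pow, integral_Icc_eq_integral_Ioc,
    ← intervalIntegral.integral_of_le zero_le_one, ← intervalIntegral.integral_of_le zero_le_one,
    integral_rpow_mul_one_sub_rpow_eq_beta hu hv] at hsubst
  linarith

theorem integral_one_sub_sq_rpow {a : ℝ} (ha : -1 < a) :
    ∫ t in (0 : ℝ)..1, (1 - t ^ 2) ^ a =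
      √Real.pi * Real.Gamma (a + 1) / (2 * Real.Gamma (a + 3 / 2)) := by
  have hbeta := integral_rpow_mul_one_sub_sq_rpow one_half_pos (neg_lt_iff_pos_add.1 ha)
  rw [ProbabilityTheory.beta, Real.Gamma_one_half_eq, add_sub_cancel_right, div_div,
    show 1 / 2 + (a + 1) = a + 3 / 2 by ring, mul_comm (Real.Gamma _) 2] at hbeta
  simpa using hbeta

theorem intervalIntegrable_one_sub_sq_rpow {a : ℝ} (ha : -1 < a) :
    IntervalIntegrable (fun t : ℝ ↦ (1 - t ^ 2) ^ a) volume 0 1 := by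
  have hsub : IntervalIntegrable (fun t : ℝ ↦ (1 - t) ^ a) volume 0 1 := by
    simpa using (intervalIntegral.intervalIntegrable_rpow' (a := 1) (b := 0) ha).comp_sub_left 1
  have hadd : ContinuousOn (fun t : ℝ ↦ (1 + t) ^ a) (Set.uIcc 0 1) := by
    refine ContinuousOn.rpow_const (by fun_prop) fun t ht ↦ Or.inl ?_
    rw [Set.uIcc_of_le zero_le_one] at ht
    linarith [ht.1]
  refine (hsub.mul_continuousOn hadd).congr fun t ht ↦ ?_
  rw [Set.uIoc_of_le zero_le_one] at ht
  rw [← Real.mul_rpow (by linarith [ht.2]) (by linarith [ht.1])]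
  ring_nf

theorem hasDerivAt_mul_one_sub_sq_rpow_mul_pow (a : ℝ) {t : ℝ} (ht : 1 - t ^ 2 ≠ 0) (j : ℕ) :
    HasDerivAt (fun t : ℝ ↦ t * (1 - t ^ 2) ^ (a + 1) * (-t ^ 2) ^ j)
      ((1 - t ^ 2) ^ a *
        ((2 * a + 3 + 2 * j) * (-t ^ 2) ^ (j + 1) + (2 * j + 1) * (-t ^ 2) ^ j)) t := by
  have hsq : HasDerivAt (fun t : ℝ ↦ -t ^ 2) (-(2 * t)) t := by
    simpa using (hasDerivAt_pow 2 t).fun_neg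
  have hweight : HasDerivAt (fun t : ℝ ↦ (1 - t ^ 2) ^ (a + 1))
      (-(2 * t) * (a + 1) * (1 - t ^ 2) ^ a) t := by
    simpa [← sub_eq_add_neg] using (hsq.const_add 1).rpow_const (p := a + 1) (Or.inl ht)
  refine (((hasDerivAt_id' t).fun_mul hweight).fun_mul (hsq.fun_pow j)).congr_deriv ?_
  rw [Real.rpow_add_one ht]
  cases j with
  | zero => simp; ring
  | succ i => push_cast; ring

/-- A monic polynomial `p` of degree `j`. For `j = i + 1` it is chosen so that
`(2 * a + 1 + 2 * j) * (1 - t ^ 2) ^ a * p (-t ^ 2)` is the derivative of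
`t * (1 - t ^ 2) ^ (a + 1) * (-t ^ 2) ^ i`. The variable stands for `-t ^ 2` rather than `t ^ 2` so
that the Vandermonde factors are `t j ^ 2 - t k ^ 2` with `j < k`. -/
noncomputable def jacobiMonic (a : ℝ) : ℕ → Polynomial ℝ
  | 0 => 1
  | j + 1 => Polynomial.X ^ (j + 1) +
      Polynomial.C ((2 * j + 1) / (2 * a + 1 + 2 * ((j : ℝ) + 1))) * Polynomial.X ^ j

theorem monic_jacobiMonic (a : ℝ) (j : ℕ) : (jacobiMonic a j).Monic := by
  cases j with
  | zero => exact Polynomial.monic_one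
  | succ j =>
    exact Polynomial.monic_X_pow_add <|
      (Polynomial.degree_C_mul_X_pow_le j _).trans_lt (mod_cast j.lt_succ_self)

theorem natDegree_jacobiMonic (a : ℝ) (j : ℕ) : (jacobiMonic a j).natDegree = j := by
  cases j with
  | zero => exact Polynomial.natDegree_one
  | succ j =>
    rw [jacobiMonic, Polynomial.natDegree_add_eq_left_of_natDegree_lt, Polynomial.natDegree_X_pow]
    grw [Polynomial.natDegree_C_mul_X_pow_le]
    simp

theorem intervalIntegrable_one_sub_sq_rpow_mul_jacobiMonic {a : ℝ} (ha : -1 < a) (j : ℕ) :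
    IntervalIntegrable (fun t : ℝ ↦ (1 - t ^ 2) ^ a * (jacobiMonic a j).eval (-t ^ 2))
      volume 0 1 :=
  (intervalIntegrable_one_sub_sq_rpow ha).mul_continuousOn (by fun_prop)

theorem integral_one_sub_sq_rpow_mul_jacobiMonic_succ {a x : ℝ} (ha : -1 < a) (hx0 : 0 ≤ x)
    (hx1 : x ≤ 1) (j : ℕ) :
    ∫ t in (0 : ℝ)..x, (1 - t ^ 2) ^ a * (jacobiMonic a (j + 1)).eval (-t ^ 2) =
      x * (1 - x ^ 2) ^ (a + 1) * (1 / (2 * a + 1 + 2 * ((j : ℝ) + 1)) * (-x ^ 2) ^ j) := by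
  have hc : 2 * a + 1 + 2 * ((j : ℝ) + 1) ≠ 0 := by
    have : (0 : ℝ) ≤ j := j.cast_nonneg
    linarith
  have hcont : ContinuousOn (fun t : ℝ ↦ t * (1 - t ^ 2) ^ (a + 1) * (-t ^ 2) ^ j)
      (Set.Icc 0 x) := by
    have : ContinuousOn (fun t : ℝ ↦ (1 - t ^ 2) ^ (a + 1)) (Set.Icc 0 x) :=
      ContinuousOn.rpow_const (by fun_prop) fun _ _ ↦ Or.inr (by linarith)
    fun_prop
  have hderiv (t : ℝ) (ht : t ∈ Set.Ioo 0 x) :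
      HasDerivAt (fun t : ℝ ↦ t * (1 - t ^ 2) ^ (a + 1) * (-t ^ 2) ^ j /
          (2 * a + 1 + 2 * ((j : ℝ) + 1)))
        ((1 - t ^ 2) ^ a * (jacobiMonic a (j + 1)).eval (-t ^ 2)) t := by
    have ht1 : 1 - t ^ 2 ≠ 0 := by nlinarith [ht.1, ht.2]
    refine ((hasDerivAt_mul_one_sub_sq_rpow_mul_pow a ht1 j).div_const _).congr_deriv ?_
    simp only [jacobiMonic, Polynomial.eval_add, Polynomial.eval_mul, Polynomial.eval_C,
      Polynomial.eval_pow, Polynomial.eval_X]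
    field_simp
    ring
  have hint := (intervalIntegrable_one_sub_sq_rpow_mul_jacobiMonic ha (j + 1)).mono_set
    (Set.uIcc_subset_uIcc Set.left_mem_uIcc (Set.mem_uIcc_of_le hx0 hx1))
  rw [intervalIntegral.integral_eq_sub_of_hasDerivAt_of_le hx0 (hcont.div_const _) hderiv hint]
  ring

theorem setIntegral_interlacing_jacobi {a : ℝ} (ha : -1 < a) {m : ℕ} {x : Fin (m + 2) → ℝ}
    (hx : Antitone x) (hx_zero : x 0 = 1) (hx_last : x (Fin.last (m + 1)) = 0) :
    ∫ t in Set.univ.pi fun i : Fin (m + 1) ↦ Set.Ioo (x i.succ) (x i.castSucc),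
        (∏ k, (1 - t k ^ 2) ^ a) * ∏ k, ∏ j ∈ Finset.Iio k, (t j ^ 2 - t k ^ 2) =
      (∫ t in (0 : ℝ)..1, (1 - t ^ 2) ^ a) *
        (∏ k : Fin m, 1 / (2 * a + 1 + 2 * ((k : ℝ) + 1))) *
        (∏ k : Fin m, x k.succ.castSucc * (1 - x k.succ.castSucc ^ 2) ^ (a + 1)) *
        ∏ k : Fin m, ∏ j ∈ Finset.Iio k, (x j.succ.castSucc ^ 2 - x k.succ.castSucc ^ 2) := by
  have hmem (k : Fin (m + 2)) : 0 ≤ x k ∧ x k ≤ 1 :=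
    ⟨hx_last ▸ hx (Fin.le_last k), hx_zero ▸ hx (Fin.zero_le k)⟩
  have hprim (k : Fin (m + 2)) (j : ℕ) :=
    integral_one_sub_sq_rpow_mul_jacobiMonic_succ ha (hmem k).1 (hmem k).2 j
  simp_rw [← det_vandermonde_neg_sq]
  simp_rw [prod_mul_det_vandermonde _ _ (fun j ↦ jacobiMonic a j)
    (fun j ↦ natDegree_jacobiMonic a j) fun j ↦ monic_jacobiMonic a j]
  rw [setIntegral_interlacing_det hx
      (fun j u ↦ (1 - u ^ 2) ^ a * (jacobiMonic a j).eval (-u ^ 2)) fun j ↦ by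
        rw [hx_last, hx_zero]
        exact intervalIntegrable_one_sub_sq_rpow_mul_jacobiMonic ha j,
    hx_last, det_eq_mul_det_submatrix_succ _ fun j ↦ ?first_row]
  case first_row =>
    have ha1 : a + 1 ≠ 0 := by linarith
    simpa [hx_zero, Real.zero_rpow ha1] using hprim 0 j
  have hminor : ((Matrix.of fun i j : Fin (m + 1) ↦ ∫ u in (0 : ℝ)..x i.castSucc,
        (1 - u ^ 2) ^ a * (jacobiMonic a j).eval (-u ^ 2)).submatrix Fin.succ Fin.succ).det =
      (∏ k : Fin m, x k.succ.castSucc * (1 - x k.succ.castSucc ^ 2) ^ (a + 1)) *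
        ((∏ k : Fin m, 1 / (2 * a + 1 + 2 * ((k : ℝ) + 1))) *
          (Matrix.vandermonde fun k : Fin m ↦ -x k.succ.castSucc ^ 2).det) := by
    rw [← Matrix.det_mul_row, ← Matrix.det_mul_column]
    congr 1
    ext i j
    exact hprim i.succ.castSucc j
  rw [hminor]
  simp only [Matrix.of_apply, Fin.castSucc_zero, hx_zero, Fin.val_zero, jacobiMonic,
    Polynomial.eval_one, mul_one]
  ring

section Reindexing

variable {M : Type*} [CommMonoid M]

theorem prod_Icc_one_eq_prod_fin (m : ℕ) (f : ℕ → M) :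
    ∏ k ∈ Finset.Icc 1 m, f k = ∏ k : Fin m, f (k + 1) := by
  rw [Fin.prod_univ_eq_prod_range (fun k ↦ f (k + 1)) m, Finset.range_eq_Ico,
    Finset.prod_Ico_add' f 0 m 1]
  rfl

theorem prod_Ico_one_eq_prod_Iio {m : ℕ} (k : Fin m) (f : ℕ → M) :
    ∏ j ∈ Finset.Ico 1 (k + 1 : ℕ), f j = ∏ j ∈ Finset.Iio k, f (j + 1) :=
  calc ∏ j ∈ Finset.Ico 1 (k + 1 : ℕ), f j
      = ∏ j ∈ Finset.Ico 0 (k : ℕ), f (j + 1) := (Finset.prod_Ico_add' f 0 k 1).symm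
    _ = ∏ j ∈ (Finset.Iio k).map Fin.valEmbedding, f (j + 1) := by
      rw [Fin.map_valEmbedding_Iio, Nat.Iio_eq_range, Finset.range_eq_Ico]
    _ = ∏ j ∈ Finset.Iio k, f (j + 1) := Finset.prod_map _ _ _

end Reindexing

/-- The chain `1, s 1, …, s m, 0`, whose consecutive gaps are the sides of the interlacing box. -/
def interlacingChain (m : ℕ) (s : ℕ → ℝ) (k : Fin (m + 2)) : ℝ :=
  if (k : ℕ) = 0 then 1 else if (k : ℕ) ≤ m then s k else 0

theorem antitone_interlacingChain {m : ℕ} {s : ℕ → ℝ} (hs1 : s 1 ≤ 1)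
    (hdec : ∀ i, 1 ≤ i → i < m → s (i + 1) ≤ s i) (hsm : 0 ≤ s m) :
    Antitone (interlacingChain m s) := by
  refine Fin.antitone_iff_succ_le.2 fun i ↦ ?_
  simp only [interlacingChain, Fin.val_succ, Fin.val_castSucc]
  grind

/-- symmetric Jacobi case, odd order.  Integrating
`∏_{k=1}^{m+1} (1-t_k²)^a ∏_{j<k}(t_j² - t_k²)` over the interlacing box
`t₁ ∈ (s₁,1), t_k ∈ (s_k, s_{k-1}) (2 ≤ k ≤ m), t_{m+1} ∈ (0, s_m)` yields
`(√π Γ(a+1)/(2Γ(a+3/2))) ∏ 1/(2a+1+2k) ∏ s_k (1-s_k²)^{a+1} ∏_{j<k}(s_j² - s_k²)`. -/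
theorem jacobi_odd_integrate_odd (a : ℝ) (ha : -1 < a) (m : ℕ) (hm : 1 ≤ m) (s : ℕ → ℝ)
    (hs1 : s 1 < 1) (hdec : ∀ i, 1 ≤ i → i < m → s (i + 1) ≤ s i) (hsm : 0 ≤ s m) :
    (∫ t in {t : Fin (m + 1) → ℝ | ∀ i : Fin (m + 1),
        (if (i : ℕ) < m then s ((i : ℕ) + 1) else 0) < t i ∧
          t i < (if (i : ℕ) = 0 then 1 else s (i : ℕ))},
      (∏ k : Fin (m + 1), (1 - (t k) ^ 2) ^ a) *
        ∏ k : Fin (m + 1), ∏ j ∈ Finset.Iio k, ((t j) ^ 2 - (t k) ^ 2)) =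
    (Real.sqrt Real.pi * Real.Gamma (a + 1) / (2 * Real.Gamma (a + 3 / 2))) *
      (∏ k ∈ Finset.Icc 1 m, (1 : ℝ) / (2 * a + 1 + 2 * k)) *
      (∏ k ∈ Finset.Icc 1 m, s k * (1 - (s k) ^ 2) ^ (a + 1)) *
      ∏ k ∈ Finset.Icc 1 m, ∏ j ∈ Finset.Ico 1 k, ((s j) ^ 2 - (s k) ^ 2) := by
  have hs : Antitone (interlacingChain m s) := antitone_interlacingChain hs1.le hdec hsm
  have hbox : {t : Fin (m + 1) → ℝ | ∀ i : Fin (m + 1),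
      (if (i : ℕ) < m then s ((i : ℕ) + 1) else 0) < t i ∧
        t i < (if (i : ℕ) = 0 then 1 else s (i : ℕ))} =
      Set.univ.pi fun i : Fin (m + 1) ↦
        Set.Ioo (interlacingChain m s i.succ) (interlacingChain m s i.castSucc) := by
    ext t
    simp [interlacingChain, Fin.is_le]
  have hnode (k : Fin m) : interlacingChain m s k.succ.castSucc = s (k + 1) := by
    simp [interlacingChain]
  rw [hbox, setIntegral_interlacing_jacobi ha hs (by simp [interlacingChain])
    (by simp [interlacingChain]), integral_one_sub_sq_rpow ha]
  simp only [hnode, prod_Icc_one_eq_prod_fin, prod_Ico_one_eq_prod_Iio, Nat.cast_add, Nat.cast_one]
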